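/- Let M, M' > 0, let R = {z ∈ ℂ : 0 < Re z < M, 0 < Im z < 1} and R' = {z ∈ ℂ : 0 < Re z < M', 0 < Im z < 1}. Suppose f : closure(R) → closure(R') is a homeomorphism which is holomorphic on R and satisfies f(0) = 0, f(M) = M', f(M + i) = M' + i, f(i) = i. Then M = M'. -/

import Mathlib

open Complex

lemma exp_const_aux (u : ℝ → ℂ) (hu : Continuous u) (h : ∀ s, Complex.exp (u s) = Complex.exp (u 0))
    (s : ℝ) : u s = u 0 := by
  have := Complex.isCoveringMap_exp.eq_of_comp_eq (A := ℝ) (g₁ := u) (g₂ := fun _ => u 0) hu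
    continuous_const (by funext s; exact Subtype.ext (h s)) 0 rfl
  exact congrFun this s

lemma no_homotopy (F : ℝ × ℝ → ℂ) (hF : Continuous F) (hne : ∀ x, F x ≠ 0) (r : ℂ)
    (hc : ∀ s, F (0, s) = F (0, 0)) (h1 : ∀ s : ℝ, F (1, s) = r * Complex.exp (s * Complex.I))
    (hper : ∀ t, F (t, 2 * Real.pi) = F (t, 0)) : False := by
  have hr : r ≠ 0 := by
    intro h; apply hne (1, 0); rw [h1, h, zero_mul]
  obtain ⟨L, ⟨-, hL⟩, -⟩ := Complex.isCoveringMap_exp.existsUnique_continuousMap_lifts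
    (A := ℝ × ℝ) ⟨fun x => (⟨F x, hne x⟩ : {z : ℂ // z ≠ 0}), by fun_prop⟩ (0, 0)
    (Complex.log (F (0, 0))) (Subtype.ext (Complex.exp_log (hne _)))
  have hL' : ∀ x, Complex.exp (L x) = F x := fun x => congrArg Subtype.val (congrFun hL x)
  have a0 : L (0, 2 * Real.pi) = L (0, 0) :=
    exp_const_aux (fun s => L (0, s)) (by fun_prop) (by intro s; simp only [hL', hc s]) _
  have a1 : L (1, 2 * Real.pi) - (2 * Real.pi : ℝ) * Complex.I = L (1, 0) - (0 : ℝ) * Complex.I :=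
    exp_const_aux (fun s => L (1, s) - s * Complex.I) (by fun_prop) (by
      intro s
      simp only [Complex.exp_sub, hL', h1]
      field_simp) _
  have a2 : L (1, 2 * Real.pi) - L (1, 0) = L (0, 2 * Real.pi) - L (0, 0) :=
    exp_const_aux (fun t => L (t, 2 * Real.pi) - L (t, 0)) (by fun_prop) (by
      intro t
      simp only [Complex.exp_sub, hL', hper]
      rw [div_self (hne _), div_self (hne _)]) _
  have : ((2 * Real.pi : ℝ) : ℂ) * Complex.I = 0 := by
    simp only [Complex.ofReal_zero, zero_mul, sub_zero] at a1
    linear_combination a2 + a0 - a1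
  simp [Real.pi_ne_zero, Complex.I_ne_zero] at this

/-- A continuous injective image of a convex compact set: boundary points are not sent to interior
points. -/
lemma boundary_aux (K K' : Set ℂ) (hK : IsCompact K) (hconv : Convex ℝ K)
    (c : ℂ) (hcK : c ∈ interior K) (f : ℂ → ℂ) (hf : ContinuousOn f K) (hb : Set.BijOn f K K')
    (p : ℂ) (hp : p ∈ K) (hpi : p ∉ interior K) : f p ∉ interior K' := by
  intro hq
  obtain ⟨ε, hε, hball⟩ := Metric.isOpen_iff.1 isOpen_interior _ hq
  set g := Function.invFunOn f K with hg
  have hgm : Set.MapsTo g K' K := hb.surjOn.mapsTo_invFunOn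
  have hfg : ∀ w ∈ K', f (g w) = w := fun w hw => hb.surjOn.rightInvOn_invFunOn hw
  have hgf : ∀ z ∈ K, g (f z) = z := fun z hz => hb.injOn.leftInvOn_invFunOn hz
  have hgc : ContinuousOn g K' := by
    rw [continuousOn_iff_isClosed]
    intro t ht
    refine ⟨f '' (K ∩ t), ((hK.inter_right ht).image_of_continuousOn
      (hf.mono Set.inter_subset_left)).isClosed, ?_⟩
    ext w
    constructor
    · rintro ⟨h1, h2⟩
      exact ⟨⟨g w, ⟨hgm h2, h1⟩, hfg w h2⟩, h2⟩
    · rintro ⟨⟨z, ⟨hz, hzt⟩, rfl⟩, h2⟩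
      refine ⟨?_, h2⟩
      simp only [Set.mem_preimage, hgf z hz, hzt]
  let γ : ℝ → ℂ := fun s => f p + (ε / 2 : ℝ) * Complex.exp (s * Complex.I)
  have hγ : ∀ s, γ s ∈ K' := fun s => by
    apply interior_subset; apply hball
    simp only [γ, Metric.mem_ball, dist_self_add_left, norm_mul, Complex.norm_exp_ofReal_mul_I,
      Complex.norm_real, mul_one, Real.norm_eq_abs]
    rw [abs_of_pos (by linarith)]; linarith
  have hγc : Continuous fun s => g (γ s) :=
    hgc.comp_continuous (by fun_prop) hγ
  let τ : ℝ → ℝ := fun t => max 0 (min t 1)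
  have hτ0 : ∀ t, 0 ≤ τ t := fun t => le_max_left _ _
  have hτ1 : ∀ t, τ t ≤ 1 := fun t => max_le zero_le_one (min_le_right _ _)
  have hτc : Continuous τ := by fun_prop
  let H : ℝ × ℝ → ℂ := fun x => c + (τ x.1 : ℂ) * (g (γ x.2) - c)
  have hHc : Continuous H := by
    have : Continuous fun x : ℝ × ℝ => g (γ x.2) := hγc.comp continuous_snd
    have h2 : Continuous fun x : ℝ × ℝ => (τ x.1 : ℂ) :=
      Complex.continuous_ofReal.comp (hτc.comp continuous_fst)
    exact continuous_const.add (h2.mul (this.sub continuous_const))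
  have hH : ∀ x, H x ∈ K ∧ H x ≠ p := by
    intro x
    have hgK := hgm (hγ x.2)
    have e : H x = (1 - τ x.1) • c + (τ x.1) • g (γ x.2) := by
      simp only [H, Complex.real_smul]; push_cast; ring
    rcases (hτ1 x.1).lt_or_eq with h | h
    · have : H x ∈ interior K := by
        rw [e]
        exact hconv.combo_interior_self_mem_interior hcK hgK (by linarith) (hτ0 _) (by ring)
      exact ⟨interior_subset this, fun h => hpi (h ▸ this)⟩
    · have e2 : H x = g (γ x.2) := by rw [e, h]; simp
      rw [e2]
      refine ⟨hgK, fun h => ?_⟩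
      have := hfg _ (hγ x.2)
      rw [h] at this
      simp [γ, hε.ne'] at this
  refine no_homotopy (fun x => f (H x) - f p) ?_ ?_ ((ε / 2 : ℝ) : ℂ) ?_ ?_ ?_
  · exact (hf.comp_continuous hHc fun x => (hH x).1).sub continuous_const
  · intro x h
    exact (hH x).2 (hb.injOn (hH x).1 hp (sub_eq_zero.1 h))
  · intro s; simp [H, τ]
  · intro s
    have : H (1, s) = g (γ s) := by simp [H, τ]
    simp only [this, hfg _ (hγ s)]
    simp [γ]
  · intro t
    have : γ (2 * Real.pi) = γ 0 := by simp [γ]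
    simp only [H, this]

lemma side_aux (a b A B : ℝ) (hab : a < b) (hA : 0 < A) (hB : 0 < B) (x y : ℝ → ℝ)
    (hx : ContinuousOn x (Set.Icc a b)) (hy : ContinuousOn y (Set.Icc a b))
    (hbd : ∀ t ∈ Set.Icc a b, (x t = 0 ∨ x t = A) ∨ (y t = 0 ∨ y t = B))
    (hcor : ∀ t ∈ Set.Ioo a b, ¬ ((x t = 0 ∨ x t = A) ∧ (y t = 0 ∨ y t = B)))
    (hyab : y a ≠ y b) : ∀ t ∈ Set.Icc a b, x t = x a := by
  have key : ∀ (D : ℝ) (hD : 0 < D) (u : ℝ → ℝ), ContinuousOn u (Set.Icc a b) →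
      (∀ t ∈ Set.Ioo a b, (u t = 0 ∨ u t = D)) → ∀ t ∈ Set.Icc a b, u t = u a := by
    intro D hD u hu h
    have hcl : ∀ t ∈ Set.Icc a b, u t ∈ ({0, D} : Set ℝ) := by
      have := (Set.MapsTo.closure_of_continuousOn (f := u) (s := Set.Ioo a b) (t := {0, D})
        (fun t ht => by simpa using h t ht) (by rwa [closure_Ioo hab.ne]))
      rw [closure_Ioo hab.ne, (Set.toFinite _).isClosed.closure_eq] at this
      exact this
    intro t ht
    exact isPreconnected_Icc.constant_of_mapsTo (Set.toFinite ({0, D} : Set ℝ)).isDiscrete hu hcl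
      ht ⟨le_rfl, hab.le⟩
  have hpre : IsPreconnected ((fun t => (x t, y t)) '' Set.Ioo a b) :=
    isPreconnected_Ioo.image _ ((hx.prodMk hy).mono Set.Ioo_subset_Icc_self)
  have hcl : ∀ D : ℝ, IsClosed ({0, D} : Set ℝ) := fun D => (Set.toFinite _).isClosed
  rcases isPreconnected_iff_subset_of_disjoint_closed.1 hpre (Prod.fst ⁻¹' {0, A})
    (Prod.snd ⁻¹' {0, B}) ((hcl A).preimage continuous_fst) ((hcl B).preimage continuous_snd)
    (by
      rintro _ ⟨t, ht, rfl⟩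
      simpa using hbd t (Set.Ioo_subset_Icc_self ht))
    (by
      ext w
      simp only [Set.mem_inter_iff, Set.mem_empty_iff_false, iff_false]
      rintro ⟨⟨t, ht, rfl⟩, h⟩
      exact hcor t ht (by simpa using h)) with h | h
  · exact key A hA x hx fun t ht => by simpa using h ⟨t, ht, rfl⟩
  · exact absurd (key B hB y hy (fun t ht => by simpa using h ⟨t, ht, rfl⟩) b
      ⟨hab.le, le_rfl⟩) hyab.symm

lemma rect_closure (M : ℝ) (hM : 0 < M) :
    closure {z : ℂ | 0 < z.re ∧ z.re < M ∧ 0 < z.im ∧ z.im < 1} =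
      Set.Icc 0 M ×ℂ Set.Icc 0 1 := by
  have : {z : ℂ | 0 < z.re ∧ z.re < M ∧ 0 < z.im ∧ z.im < 1} = Set.Ioo 0 M ×ℂ Set.Ioo 0 1 := by
    ext z; simp [Complex.mem_reProdIm, and_assoc]
  rw [this, Complex.closure_reProdIm, closure_Ioo hM.ne, closure_Ioo zero_ne_one]

lemma rect_interior (M : ℝ) (z : ℂ) : z ∈ interior (Set.Icc 0 M ×ℂ Set.Icc (0:ℝ) 1) ↔
      0 < z.re ∧ z.re < M ∧ 0 < z.im ∧ z.im < 1 := by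
  rw [Complex.interior_reProdIm, interior_Icc, interior_Icc]
  simp [Complex.mem_reProdIm, and_assoc]

theorem stmt_7 (M M' : ℝ) (hM : 0 < M) (hM' : 0 < M')
    (R R' : Set ℂ)
    (hR : R = {z : ℂ | 0 < z.re ∧ z.re < M ∧ 0 < z.im ∧ z.im < 1})
    (hR' : R' = {z : ℂ | 0 < z.re ∧ z.re < M' ∧ 0 < z.im ∧ z.im < 1})
    (f : ℂ → ℂ)
    (hcont : ContinuousOn f (closure R))
    (hbij : Set.BijOn f (closure R) (closure R'))
    (hhol : DifferentiableOn ℂ f R)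
    (h0 : f 0 = 0) (h1 : f (M : ℂ) = (M' : ℂ))
    (h2 : f ((M : ℂ) + Complex.I) = (M' : ℂ) + Complex.I)
    (h3 : f Complex.I = Complex.I) :
    M = M' := by
  have hRc : closure R = Set.Icc 0 M ×ℂ Set.Icc 0 1 := by rw [hR, rect_closure M hM]
  have hRc' : closure R' = Set.Icc 0 M' ×ℂ Set.Icc 0 1 := by rw [hR', rect_closure M' hM']
  rw [hRc] at hcont hbij
  rw [hRc'] at hbij
  set K := Set.Icc 0 M ×ℂ Set.Icc (0:ℝ) 1 with hK
  have memK : ∀ z : ℂ, z ∈ K ↔ (0 ≤ z.re ∧ z.re ≤ M) ∧ (0 ≤ z.im ∧ z.im ≤ 1) := by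
    intro z; simp [hK, Complex.mem_reProdIm]
  have hKc : IsCompact K := isCompact_Icc.reProdIm isCompact_Icc
  have hKconv : Convex ℝ K := 
    ((convex_Icc 0 M).is_linear_preimage (f := Complex.re) Complex.reLm.isLinear).inter
      ((convex_Icc 0 1).is_linear_preimage (f := Complex.im) Complex.imLm.isLinear)
  -- boundary goes to boundary
  have hbd : ∀ z ∈ K, ((z.re = 0 ∨ z.re = M) ∨ (z.im = 0 ∨ z.im = 1)) →
      (((f z).re = 0 ∨ (f z).re = M') ∨ ((f z).im = 0 ∨ (f z).im = 1)) := by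
    intro z hz hzb
    have h := boundary_aux K _ hKc hKconv (⟨M / 2, 1 / 2⟩ : ℂ)
      ((rect_interior M _).2 (by refine ⟨?_, ?_, ?_, ?_⟩ <;> simp only <;> linarith)) f hcont hbij z hz
      (by
        rw [rect_interior]
        rintro ⟨a1, a2, a3, a4⟩
        rcases hzb with (h | h) | (h | h) <;> linarith)
    have hw := hbij.mapsTo hz
    simp only [Complex.mem_reProdIm, Set.mem_Icc] at hw
    obtain ⟨⟨b1, b2⟩, b3, b4⟩ := hw
    by_contra hcon
    push Not at hcon
    obtain ⟨⟨c1, c2⟩, c3, c4⟩ := hcon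
    exact h ((rect_interior M' _).2
      ⟨lt_of_le_of_ne b1 c1.symm, lt_of_le_of_ne b2 c2, lt_of_le_of_ne b3 c3.symm,
        lt_of_le_of_ne b4 c4⟩)
  -- only corners go to corners
  have hcor : ∀ z ∈ K, (((f z).re = 0 ∨ (f z).re = M') ∧ ((f z).im = 0 ∨ (f z).im = 1)) →
      ((z.re = 0 ∨ z.re = M) ∧ (z.im = 0 ∨ z.im = 1)) := by
    rintro z hz ⟨hr, hi⟩
    have inj : ∀ w ∈ K, f z = f w → z = w := fun w hw h => hbij.injOn hz hw h
    rcases hr with hr | hr <;> rcases hi with hi | hi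
    · have := inj 0 (by rw [memK]; simp [hM.le]) (by rw [h0]; apply Complex.ext <;> simp [hr, hi])
      simp [this]
    · have := inj Complex.I (by rw [memK]; simp [hM.le])
        (by rw [h3]; apply Complex.ext <;> simp [hr, hi])
      simp [this]
    · have := inj M (by rw [memK]; simp [hM.le]) (by rw [h1]; apply Complex.ext <;> simp [hr, hi])
      simp [this]
    · have := inj (M + Complex.I) (by rw [memK]; simp [hM.le])
        (by rw [h2]; apply Complex.ext <;> simp [hr, hi])
      simp [this]
  -- the four sides
  have horK : ∀ v : ℝ, (v = 0 ∨ v = 1) → ∀ t ∈ Set.Icc 0 M, (t + v * Complex.I : ℂ) ∈ K := by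
    intro v hv t ht
    rw [memK]
    rcases hv with rfl | rfl <;> simpa using ht
  have verK : ∀ v : ℝ, (v = 0 ∨ v = M) → ∀ t ∈ Set.Icc (0:ℝ) 1, (v + t * Complex.I : ℂ) ∈ K := by
    intro v hv t ht
    rw [memK]
    rcases hv with rfl | rfl <;> simpa [hM.le] using ht
  have horc : ∀ v : ℝ, (v = 0 ∨ v = 1) →
      ContinuousOn (fun t : ℝ => f (t + v * Complex.I)) (Set.Icc 0 M) := fun v hv =>
    hcont.comp (by fun_prop) (horK v hv)
  have verc : ∀ v : ℝ, (v = 0 ∨ v = M) →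
      ContinuousOn (fun t : ℝ => f (v + t * Complex.I)) (Set.Icc 0 1) := fun v hv =>
    hcont.comp (by fun_prop) (verK v hv)
  have hor : ∀ v : ℝ, (v = 0 ∨ v = 1) → ∀ t ∈ Set.Icc 0 M, (f (t + v * Complex.I)).im = v := by
    intro v hv t ht
    have := side_aux 0 M 1 M' hM one_pos hM' (fun t : ℝ => (f (t + v * Complex.I)).im)
      (fun t : ℝ => (f (t + v * Complex.I)).re)
      (Complex.continuous_im.comp_continuousOn (horc v hv))
      (Complex.continuous_re.comp_continuousOn (horc v hv))
      (fun t ht => (hbd _ (horK v hv t ht) (Or.inr (by simpa using hv))).symm)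
      (fun t ht h => by
        have := (hcor _ (horK v hv t (Set.Ioo_subset_Icc_self ht)) h.symm).1
        simp only [Complex.add_re, Complex.ofReal_re, Complex.mul_re, Complex.I_re, mul_zero,
          Complex.ofReal_im, Complex.I_im, zero_mul, sub_zero, add_zero] at this
        rcases this with h | h
        · exact ht.1.ne' h
        · exact ht.2.ne h)
      (by rcases hv with rfl | rfl <;> simp [h0, h1, h2, h3, hM'.ne]) t ht
    rw [this]
    rcases hv with rfl | rfl <;> simp [h0, h3]
  have ver0 : ∀ t ∈ Set.Icc (0:ℝ) 1, ∀ v : ℝ, (v = 0 ∨ v = M) →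
      (f (v + t * Complex.I)).re = (f v).re := by
    intro t ht v hv
    have := side_aux 0 1 M' 1 one_pos hM' one_pos (fun t : ℝ => (f (v + t * Complex.I)).re)
      (fun t : ℝ => (f (v + t * Complex.I)).im)
      (Complex.continuous_re.comp_continuousOn (verc v hv))
      (Complex.continuous_im.comp_continuousOn (verc v hv))
      (fun t ht => (hbd _ (verK v hv t ht) (Or.inl (by simpa using hv))))
      (fun t ht h => by
        have := (hcor _ (verK v hv t (Set.Ioo_subset_Icc_self ht)) h).2
        simp only [Complex.add_im, Complex.ofReal_re, Complex.mul_im, Complex.I_re, mul_zero,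
          Complex.ofReal_im, Complex.I_im, mul_one, zero_add, add_zero] at this
        rcases this with h | h
        · exact ht.1.ne' h
        · exact ht.2.ne h)
      (by rcases hv with rfl | rfl <;> simp [h0, h1, h2, h3]) t ht
    rw [this]
    simp
  -- the Cauchy theorem on the rectangle
  have hC := Complex.integral_boundary_rect_eq_zero_of_continuousOn_of_differentiableOn f 0
    (M + Complex.I) (by simpa [Set.uIcc_of_le hM.le] using hcont) (by
      refine hhol.mono ?_
      intro z hz
      rw [hR]
      simpa [Complex.mem_reProdIm, hM.le, and_assoc] using hz)
  simp only [Complex.add_re, Complex.ofReal_re, Complex.I_re, add_zero, Complex.add_im,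
    Complex.ofReal_im, Complex.I_im, zero_add, Complex.zero_re, Complex.zero_im] at hC
  have hi : ∀ v : ℝ, (v = 0 ∨ v = 1) → (∫ x : ℝ in (0:ℝ)..M, f (x + v * Complex.I)).im = M * v := by
    intro v hv
    have hint : IntervalIntegrable (fun x : ℝ => f (x + v * Complex.I)) MeasureTheory.volume 0 M :=
      ContinuousOn.intervalIntegrable (by rw [Set.uIcc_of_le hM.le]; exact horc v hv)
    have e := Complex.imCLM.intervalIntegral_comp_comm hint
    simp only [Complex.imCLM_apply] at e
    rw [← e, intervalIntegral.integral_congr (g := fun _ => v)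
      (fun t ht => hor v hv t (by rwa [Set.uIcc_of_le hM.le] at ht))]
    simp
  have hr : ∀ v : ℝ, (v = 0 ∨ v = M) →
      (∫ y : ℝ in (0:ℝ)..1, f (v + y * Complex.I)).re = (f v).re := by
    intro v hv
    have hint : IntervalIntegrable (fun y : ℝ => f (v + y * Complex.I)) MeasureTheory.volume 0 1 :=
      ContinuousOn.intervalIntegrable (by rw [Set.uIcc_of_le zero_le_one]; exact verc v hv)
    have e := Complex.reCLM.intervalIntegral_comp_comm hint
    simp only [Complex.reCLM_apply] at e
    rw [← e, intervalIntegral.integral_congr (g := fun _ => (f v).re)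
      (fun t ht => ver0 t (by rwa [Set.uIcc_of_le zero_le_one] at ht) v hv)]
    simp
  have hCi := congrArg Complex.im hC
  have e1 := hi 0 (Or.inl rfl)
  have e2 := hi 1 (Or.inr rfl)
  have e3 := hr 0 (Or.inl rfl)
  have e4 := hr M (Or.inr rfl)
  rw [h1, Complex.ofReal_re] at e4
  have e5 : (f ((0:ℝ) : ℂ)).re = 0 := by simp [h0]
  simp only [Complex.add_im, Complex.sub_im, smul_eq_mul, Complex.mul_im, Complex.I_re,
    Complex.I_im, Complex.zero_im, e1, e2, e3, e4, e5] at hCi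
  linarith
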